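/- (Optimality of the marginals in the inner minimization.) Let p be a strictly positive joint pmf on Fin m × Fin n and q a strictly positive conditional pmf. Then for all functions r : Fin k → Fin m → ℝ and s : Fin k → Fin n → ℝ with r z x > 0 and s z y > 0 for all z, x, y, ∑_z r z x = 1 for every x, and ∑_z s z y = 1 for every y, one has ∑_{x,y,z} p x y · q z x y · log( q z x y / (r z x · s z y) ) ≥ ∑_{x,y,z} p x y · q z x y · log( q z x y / (qX z x · qY z y) ). That is, among all such (r, s), the choice r = qX, s = qY minimizes the left-hand side. -/

import Mathlib

open Real Finset Filter

/-- A strictly positive joint pmf on `Fin m × Fin n`. -/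
def IsJointPMF {m n : ℕ} (p : Fin m → Fin n → ℝ) : Prop :=
  (∀ x y, 0 < p x y) ∧ (∑ x, ∑ y, p x y = 1)

/-- A strictly positive conditional pmf `q z x y = q(z | x, y)`. -/
def IsCondPMF {m n k : ℕ} (q : Fin k → Fin m → Fin n → ℝ) : Prop :=
  (∀ z x y, 0 < q z x y) ∧ (∀ x y, ∑ z, q z x y = 1)

/-- Marginal `q(z | x)`. -/
noncomputable def qX {m n k : ℕ} (p : Fin m → Fin n → ℝ)
    (q : Fin k → Fin m → Fin n → ℝ) (z : Fin k) (x : Fin m) : ℝ :=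
  (∑ y, q z x y * p x y) / (∑ y, p x y)

/-- Marginal `q(z | y)`. -/
noncomputable def qY {m n k : ℕ} (p : Fin m → Fin n → ℝ)
    (q : Fin k → Fin m → Fin n → ℝ) (z : Fin k) (y : Fin n) : ℝ :=
  (∑ x, q z x y * p x y) / (∑ x, p x y)

/-- Marginal `q(z)`. -/
noncomputable def qZ {m n k : ℕ} (p : Fin m → Fin n → ℝ)
    (q : Fin k → Fin m → Fin n → ℝ) (z : Fin k) : ℝ :=
  ∑ x, ∑ y, q z x y * p x y

/-- The LatentSearch update `T_β(q)`. Here `(qZ z) ^ (1 - β)` is the real power `rpow`. -/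
noncomputable def latentUpdate {m n k : ℕ} (β : ℝ) (p : Fin m → Fin n → ℝ)
    (q : Fin k → Fin m → Fin n → ℝ) : Fin k → Fin m → Fin n → ℝ :=
  fun z x y =>
    (qX p q z x * qY p q z y / (qZ p q z) ^ (1 - β)) /
      (∑ z', qX p q z' x * qY p q z' y / (qZ p q z') ^ (1 - β))

/-- The loss `L_β(q) = I(X;Y|Z) + β H(Z)` computed from the joint `r(x,y,z) = q z x y * p x y`. -/
noncomputable def loss {m n k : ℕ} (β : ℝ) (p : Fin m → Fin n → ℝ)
    (q : Fin k → Fin m → Fin n → ℝ) : ℝ :=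
  (∑ x, ∑ y, ∑ z, (q z x y * p x y) *
      Real.log ((q z x y * p x y) * qZ p q z /
        ((∑ y', q z x y' * p x y') * (∑ x', q z x' y * p x' y)))) -
    β * ∑ z, qZ p q z * Real.log (qZ p q z)

/-- The mutual information `I(X;Y)` of the observed joint pmf `p`. -/
noncomputable def mutualInfo {m n : ℕ} (p : Fin m → Fin n → ℝ) : ℝ :=
  ∑ x, ∑ y, p x y * Real.log (p x y / ((∑ y', p x y') * (∑ x', p x' y)))

/-!
Replacing `(qX, qY)` by `(r, s)` raises the objective by
`∑ p q log (qX / r) + ∑ p q log (qY / s)`. For fixed `x`, the sum over `y` and `z` in the first term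
is `∑ y, p x y` times the relative entropy with respect to `r` of the weighted average `qX` of the
laws `q(· | x, y)`, hence nonnegative by Gibbs' inequality; for fixed `y`, the second term is
handled in the same way.
-/

section Gibbs

variable {ι ζ : Type*}

lemma sub_le_mul_log_div {a b : ℝ} (ha : 0 ≤ a) (hb : 0 ≤ b) (hab : b = 0 → a = 0) :
    a - b ≤ a * Real.log (a / b) := by
  rcases ha.eq_or_lt with rfl | ha
  · simpa using hb
  have hb : 0 < b := hb.lt_of_ne' (mt hab ha.ne')
  calc
    a - b = a * (1 - (a / b)⁻¹) := by field_simp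
    _ ≤ a * Real.log (a / b) := by
      gcongr
      exact one_sub_inv_le_log_of_pos (div_pos ha hb)

theorem gibbs_inequality {u : Finset ζ} {a b : ζ → ℝ} (ha : ∀ z ∈ u, 0 ≤ a z)
    (hb : ∀ z ∈ u, 0 ≤ b z) (hab : ∀ z ∈ u, b z = 0 → a z = 0)
    (hsum : ∑ z ∈ u, b z ≤ ∑ z ∈ u, a z) :
    0 ≤ ∑ z ∈ u, a z * Real.log (a z / b z) :=
  calc
    0 ≤ ∑ z ∈ u, (a z - b z) := by rw [sum_sub_distrib]; exact sub_nonneg.2 hsum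
    _ ≤ ∑ z ∈ u, a z * Real.log (a z / b z) :=
      sum_le_sum fun z hz => sub_le_mul_log_div (ha z hz) (hb z hz) (hab z hz)

lemma centerMass_ne_zero {K : Type*} [Field K] [LinearOrder K] [IsStrictOrderedRing K]
    {t : Finset ι} {w f : ι → K} (hw : ∀ i ∈ t, 0 ≤ w i) (hf : ∀ i ∈ t, 0 ≤ f i)
    {i : ι} (hi : i ∈ t) (hwf : w i * f i ≠ 0) :
    t.centerMass w f ≠ 0 := by
  have sum_ne_zero : ∑ j ∈ t, w j ≠ 0 := fun h =>
    left_ne_zero_of_mul hwf ((sum_eq_zero_iff_of_nonneg hw).1 h i hi)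
  have sum_mul_ne_zero : ∑ j ∈ t, w j * f j ≠ 0 := fun h =>
    hwf ((sum_eq_zero_iff_of_nonneg fun j hj => mul_nonneg (hw j hj) (hf j hj)).1 h i hi)
  exact mul_ne_zero (inv_ne_zero sum_ne_zero) sum_mul_ne_zero

theorem gibbs_inequality_centerMass {t : Finset ι} {u : Finset ζ} {w : ι → ℝ} {f : ζ → ι → ℝ}
    {g : ζ → ℝ} (hw : ∀ i ∈ t, 0 ≤ w i) (hf : ∀ z ∈ u, ∀ i ∈ t, 0 ≤ f z i)
    (hfsum : ∀ i ∈ t, ∑ z ∈ u, f z i = 1) (hg : ∀ z ∈ u, 0 ≤ g z) (hgsum : ∑ z ∈ u, g z ≤ 1)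
    (hfg : ∀ z ∈ u, ∀ i ∈ t, g z = 0 → w i * f z i = 0) :
    0 ≤ ∑ i ∈ t, ∑ z ∈ u, w i * f z i * Real.log (t.centerMass w (f z) / g z) := by
  let W := ∑ i ∈ t, w i
  let S (z : ζ) := ∑ i ∈ t, w i * f z i
  have sum_S : ∑ z ∈ u, S z = W := by
    rw [sum_comm]
    exact sum_congr rfl fun i hi => by rw [← mul_sum, hfsum i hi, mul_one]
  have centerMass_div (z : ζ) : t.centerMass w (f z) / g z = S z / (W * g z) := by
    rw [centerMass, smul_eq_mul, inv_mul_eq_div, div_div]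
    rfl
  have W_nonneg : 0 ≤ W := sum_nonneg hw
  have S_eq_zero : ∀ z ∈ u, W * g z = 0 → S z = 0 := by
    intro z hz h
    refine sum_eq_zero fun i hi => ?_
    rcases mul_eq_zero.1 h with hW | hgz
    · rw [(sum_eq_zero_iff_of_nonneg hw).1 hW i hi, zero_mul]
    · exact hfg z hz i hi hgz
  have sum_le : ∑ z ∈ u, W * g z ≤ ∑ z ∈ u, S z := by
    rw [sum_S, ← mul_sum]
    exact mul_le_of_le_one_right W_nonneg hgsum
  rw [sum_comm]
  simp only [← sum_mul, centerMass_div]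
  exact gibbs_inequality
    (fun z hz => sum_nonneg fun i hi => mul_nonneg (hw i hi) (hf z hz i hi))
    (fun z hz => mul_nonneg W_nonneg (hg z hz)) S_eq_zero sum_le

end Gibbs

lemma log_div_mul_eq_add {c a b r s : ℝ} (hc : c ≠ 0) (ha : a ≠ 0) (hb : b ≠ 0) (hr : r ≠ 0)
    (hs : s ≠ 0) :
    Real.log (c / (r * s)) =
      Real.log (c / (a * b)) + (Real.log (a / r) + Real.log (b / s)) := by
  rw [← Real.log_mul (div_ne_zero ha hr) (div_ne_zero hb hs),
    ← Real.log_mul (div_ne_zero hc (mul_ne_zero ha hb)) (by positivity)]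
  congr 1
  field_simp

/-- Since `x / 0 = 0` and `log 0 = 0`, the sum on the right is finite also for pairs `(r, s)` that
vanish where `p q` does not, for which the usual convention makes it `+∞`. -/
theorem inner_minimization_optimality_general {X Y Z : Type*} [Fintype X] [Fintype Y] [Fintype Z]
    {p : X → Y → ℝ} (hp : ∀ x y, 0 ≤ p x y)
    {q : Z → X → Y → ℝ} (hq : ∀ z x y, 0 ≤ q z x y) (hqsum : ∀ x y, ∑ z, q z x y = 1)
    {r : Z → X → ℝ} {s : Z → Y → ℝ} (hr : ∀ z x, 0 ≤ r z x) (hs : ∀ z y, 0 ≤ s z y)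
    (hrsum : ∀ x, ∑ z, r z x ≤ 1) (hssum : ∀ y, ∑ z, s z y ≤ 1)
    (hrq : ∀ z x y, r z x = 0 → p x y * q z x y = 0)
    (hsq : ∀ z x y, s z y = 0 → p x y * q z x y = 0) :
    ∑ x, ∑ y, ∑ z, p x y * q z x y * Real.log (q z x y /
        (univ.centerMass (p x) (q z x) * univ.centerMass (p · y) (q z · y))) ≤
      ∑ x, ∑ y, ∑ z, p x y * q z x y * Real.log (q z x y / (r z x * s z y)) := by
  let a z x := univ.centerMass (p x) (q z x)
  let b z y := univ.centerMass (p · y) (q z · y)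
  have gain_r : 0 ≤ ∑ x, ∑ y, ∑ z, p x y * q z x y * Real.log (a z x / r z x) :=
    sum_nonneg fun x _ => gibbs_inequality_centerMass (fun y _ => hp x y)
      (fun z _ y _ => hq z x y) (fun y _ => hqsum x y) (fun z _ => hr z x) (hrsum x)
      (fun z _ y _ => hrq z x y)
  have gain_s : 0 ≤ ∑ x, ∑ y, ∑ z, p x y * q z x y * Real.log (b z y / s z y) := by
    rw [sum_comm]
    exact sum_nonneg fun y _ => gibbs_inequality_centerMass (fun x _ => hp x y)
      (fun z _ x _ => hq z x y) (fun x _ => hqsum x y) (fun z _ => hs z y) (hssum y)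
      (fun z _ x _ => hsq z x y)
  have term_eq (x : X) (y : Y) (z : Z) :
      p x y * q z x y * Real.log (q z x y / (r z x * s z y)) =
        p x y * q z x y * Real.log (q z x y / (a z x * b z y)) +
          (p x y * q z x y * Real.log (a z x / r z x) +
            p x y * q z x y * Real.log (b z y / s z y)) := by
    by_cases hpq : p x y * q z x y = 0
    · simp only [hpq, zero_mul, add_zero]
    have ha : a z x ≠ 0 :=
      centerMass_ne_zero (fun y _ => hp x y) (fun y _ => hq z x y) (mem_univ y) hpq
    have hb : b z y ≠ 0 :=
      centerMass_ne_zero (fun x _ => hp x y) (fun x _ => hq z x y) (mem_univ x) hpq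
    rw [log_div_mul_eq_add (right_ne_zero_of_mul hpq) ha hb (mt (hrq z x y) hpq)
      (mt (hsq z x y) hpq), mul_add, mul_add]
  simp only [term_eq, sum_add_distrib]
  exact le_add_of_nonneg_right (add_nonneg gain_r gain_s)

section Marginals

variable {m n k : ℕ} (p : Fin m → Fin n → ℝ) (q : Fin k → Fin m → Fin n → ℝ)

lemma qX_eq_centerMass (z : Fin k) (x : Fin m) :
    qX p q z x = univ.centerMass (p x) (q z x) := by
  simp only [qX, centerMass, smul_eq_mul, inv_mul_eq_div, mul_comm]

lemma qY_eq_centerMass (z : Fin k) (y : Fin n) :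
    qY p q z y = univ.centerMass (p · y) (q z · y) := by
  simp only [qY, centerMass, smul_eq_mul, inv_mul_eq_div, mul_comm]

end Marginals

/-- Optimality of the marginals in the inner minimization: among all strictly
positive conditionals `r(z|x)`, `s(z|y)`, the choice `r = qX`, `s = qY` minimizes
`∑ p(x,y) q(z|x,y) log(q(z|x,y)/(r(z|x) s(z|y)))`. -/
theorem inner_minimization_optimality (m n k : ℕ)
    (hm : 1 ≤ m) (hn : 1 ≤ n) (hk : 1 ≤ k)
    (p : Fin m → Fin n → ℝ) (hp : IsJointPMF p)
    (q : Fin k → Fin m → Fin n → ℝ) (hq : IsCondPMF q)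
    (r : Fin k → Fin m → ℝ) (s : Fin k → Fin n → ℝ)
    (hr : ∀ z x, 0 < r z x) (hs : ∀ z y, 0 < s z y)
    (hrsum : ∀ x, ∑ z, r z x = 1) (hssum : ∀ y, ∑ z, s z y = 1) :
    ∑ x, ∑ y, ∑ z, p x y * q z x y * Real.log (q z x y / (r z x * s z y)) ≥
      ∑ x, ∑ y, ∑ z, p x y * q z x y *
        Real.log (q z x y / (qX p q z x * qY p q z y)) := by
  simp only [qX_eq_centerMass, qY_eq_centerMass]
  exact inner_minimization_optimality_general (fun x y => (hp.1 x y).le)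
    (fun z x y => (hq.1 z x y).le) hq.2 (fun z x => (hr z x).le) (fun z y => (hs z y).le)
    (fun x => (hrsum x).le) (fun y => (hssum y).le)
    (fun z x _ h => absurd h (hr z x).ne') (fun z _ y h => absurd h (hs z y).ne')
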